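/- Let g : ℝ^n → ℝ be continuously differentiable and let y : [0,∞) → ℝ^n be a solution of the gradient flow y′(t) = −∇g(y(t)) whose range {y(t) : t ≥ 0} is bounded. Then every limit point of y(t) as t → ∞ is a critical point of g; that is, if t_k → ∞ and y(t_k) → ȳ, then ∇g(ȳ) = 0. -/

import Mathlib

/-!
Along a gradient flow, `g ∘ y` has derivative `-‖y'‖ ^ 2`, so it decreases; since it clusters at
`g x`, it converges. Cauchy–Schwarz bounds the squared displacement over `[s, t]` by `t - s` times
the drop of `g ∘ y`, so the trajectory moves less and less over `[s, s + 1]` as `s → ∞`. The mean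
value theorem gives a time `ξ s ∈ (s, s + 1)` at which the squared gradient norm equals the drop
over `[s, s + 1]`. Hence `∇ g (y (ξ s)) → 0`, while `y ∘ ξ` has the same limit points as `y`.
-/

open Filter Set
open scoped Gradient Topology

theorem tendsto_of_antitoneOn_Ici_of_mapClusterPt {α β : Type*} [Preorder α] [LinearOrder β]
    [TopologicalSpace β] [OrderTopology β] {f : α → β} {a : α} {x : β}
    (hf : AntitoneOn f (Ici a)) (hx : MapClusterPt x atTop f) : Tendsto f atTop (𝓝 x) := by
  have lower_bound : ∀ t ∈ Ici a, x ≤ f t := by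
    intro t ht
    by_contra! hlt
    obtain ⟨s, hs, hts⟩ :=
      ((hx.frequently (eventually_gt_nhds hlt)).and_eventually (eventually_ge_atTop t)).exists
    exact (hf ht (le_trans ht hts) hts).not_gt hs
  refine tendsto_order.2 ⟨fun c hc => ?_, fun c hc => ?_⟩
  · filter_upwards [eventually_ge_atTop a] with t ht using hc.trans_le (lower_bound t ht)
  · obtain ⟨s, hs, has⟩ :=
      ((hx.frequently (eventually_lt_nhds hc)).and_eventually (eventually_ge_atTop a)).exists
    filter_upwards [eventually_ge_atTop s] with t hst
    exact (hf has (le_trans has hst) hst).trans_lt hs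

theorem sq_norm_sub_le_mul_sub_of_sq_norm_deriv_right_le {E : Type*} [NormedAddCommGroup E]
    [NormedSpace ℝ E] {γ γ' : ℝ → E} {f f' : ℝ → ℝ} {a b : ℝ} (hab : a ≤ b)
    (hγ : ContinuousOn γ (Icc a b)) (hγ' : ∀ t ∈ Ico a b, HasDerivWithinAt γ (γ' t) (Ici t) t)
    (hf : ContinuousOn f (Icc a b)) (hf' : ∀ t ∈ Ico a b, HasDerivWithinAt f (f' t) (Ici t) t)
    (bound : ∀ t ∈ Ico a b, ‖γ' t‖ ^ 2 ≤ f' t) :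
    ‖γ b - γ a‖ ^ 2 ≤ (b - a) * (f b - f a) := by
  -- AM-GM linearises `‖γ'‖ ≤ √f'`; the optimal parameter `h` is the average speed.
  have linearised : ∀ h ≥ 0, 2 * h * ‖γ b - γ a‖ ≤ h ^ 2 * (b - a) + (f b - f a) := by
    intro h hh
    have scaled : ‖(2 * h) • (γ b - γ a)‖ ≤ h ^ 2 * (b - a) + (f b - f a) := by
      refine image_norm_le_of_norm_deriv_right_le_deriv_boundary'
        (f := fun t => (2 * h) • (γ t - γ a)) (f' := fun t => (2 * h) • γ' t)
        (B := fun t => h ^ 2 * (t - a) + (f t - f a)) (B' := fun t => h ^ 2 * 1 + f' t)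
        (by fun_prop) (fun t ht => ((hγ' t ht).sub_const _).const_smul _) (by simp)
        (by fun_prop)
        (fun t ht => (((hasDerivWithinAt_id t _).sub_const a).const_mul _).add
          ((hf' t ht).sub_const _))
        (fun t ht => ?_) (right_mem_Icc.2 hab)
      rw [norm_smul, Real.norm_of_nonneg (by positivity)]
      linarith [bound t ht, two_mul_le_add_sq h ‖γ' t‖]
    rwa [norm_smul, Real.norm_of_nonneg (by positivity)] at scaled
  rcases hab.eq_or_lt with rfl | hlt
  · simp
  have hba : 0 < b - a := sub_pos.2 hlt
  have optimised := linearised (‖γ b - γ a‖ / (b - a)) (by positivity)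
  field_simp at optimised
  linarith

theorem continuous_gradient_of_contDiff {𝕜 F : Type*} [RCLike 𝕜] [NormedAddCommGroup F]
    [InnerProductSpace 𝕜 F] [CompleteSpace F] {g : F → 𝕜} (hg : ContDiff 𝕜 1 g) :
    Continuous (∇ g) :=
  (InnerProductSpace.toDual 𝕜 F).symm.continuous.comp (hg.continuous_fderiv one_ne_zero)

section GradientFlow

variable {E : Type*} [NormedAddCommGroup E] [InnerProductSpace ℝ E] [CompleteSpace E]
  {g : E → ℝ} {y : ℝ → E} {s : Set ℝ} {a b : ℝ}

/-- `y` solves the gradient flow `y' t = -∇ g (y t)` on the time set `s`. At a boundary point of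
`s` the derivative is the one within `s`, so on `Ici 0` it is one-sided at time `0`. -/
def IsGradientFlowOn (g : E → ℝ) (y : ℝ → E) (s : Set ℝ) : Prop :=
  IsIntegralCurveOn y (fun _ x => -∇ g x) s

namespace IsGradientFlowOn

theorem hasDerivWithinAt_comp (hy : IsGradientFlowOn g y s) (hg : Differentiable ℝ g) {t : ℝ}
    (ht : t ∈ s) : HasDerivWithinAt (fun t => g (y t)) (-‖∇ g (y t)‖ ^ 2) s t := by
  have chain := (hg (y t)).hasFDerivAt.comp_hasDerivWithinAt t (hy t ht)
  rwa [← inner_gradient_left, inner_neg_right, real_inner_self_eq_norm_sq] at chain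

theorem continuousOn_comp (hy : IsGradientFlowOn g y s) (hg : Differentiable ℝ g) :
    ContinuousOn (fun t => g (y t)) s :=
  hg.continuous.comp_continuousOn hy.continuousOn

theorem sq_norm_sub_le_mul_sub (hy : IsGradientFlowOn g y (Icc a b)) (hg : Differentiable ℝ g)
    (hab : a ≤ b) : ‖y b - y a‖ ^ 2 ≤ (b - a) * (g (y a) - g (y b)) := by
  have right_nhds : ∀ t ∈ Ico a b, Icc a b ∈ 𝓝[≥] t := fun t ht => Icc_mem_nhdsGE_of_mem ht
  have bound := sq_norm_sub_le_mul_sub_of_sq_norm_deriv_right_le hab hy.continuousOn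
    (fun t ht => (hy t (Ico_subset_Icc_self ht)).mono_of_mem_nhdsWithin (right_nhds t ht))
    (hy.continuousOn_comp hg).neg
    (fun t ht => ((hy.hasDerivWithinAt_comp hg (Ico_subset_Icc_self ht)).mono_of_mem_nhdsWithin
      (right_nhds t ht)).neg)
    (fun t _ => by rw [norm_neg, neg_neg])
  simpa only [Pi.neg_apply, neg_sub_neg] using bound

theorem antitoneOn_comp (hy : IsGradientFlowOn g y s) (hg : Differentiable ℝ g)
    (hs : s.OrdConnected) : AntitoneOn (fun t => g (y t)) s := by
  intro t ht u hu htu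
  rcases htu.eq_or_lt with rfl | hlt
  · rfl
  have drop_nonneg : 0 ≤ (u - t) * (g (y t) - g (y u)) :=
    (sq_nonneg _).trans (IsGradientFlowOn.sq_norm_sub_le_mul_sub (hy.mono (hs.out ht hu)) hg htu)
  exact sub_nonneg.1 (nonneg_of_mul_nonneg_right drop_nonneg (sub_pos.2 hlt))

theorem exists_mul_sq_norm_gradient_eq (hy : IsGradientFlowOn g y (Icc a b))
    (hg : Differentiable ℝ g) (hab : a < b) :
    ∃ ξ ∈ Ioo a b, (b - a) * ‖∇ g (y ξ)‖ ^ 2 = g (y a) - g (y b) := by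
  obtain ⟨ξ, hξ, hslope⟩ := exists_hasDerivAt_eq_slope _ _ hab (hy.continuousOn_comp hg)
    fun t ht => (hy.hasDerivWithinAt_comp hg (Ioo_subset_Icc_self ht)).hasDerivAt
      (Icc_mem_nhds ht.1 ht.2)
  refine ⟨ξ, hξ, ?_⟩
  rw [eq_div_iff (sub_pos.2 hab).ne'] at hslope
  linarith

theorem exists_sq_norm_sub_le_and_sq_norm_gradient_eq (hy : IsGradientFlowOn g y (Icc a (a + 1)))
    (hg : Differentiable ℝ g) :
    ∃ ξ, ‖y ξ - y a‖ ^ 2 ≤ g (y a) - g (y (a + 1)) ∧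
      ‖∇ g (y ξ)‖ ^ 2 = g (y a) - g (y (a + 1)) := by
  have ha : a < a + 1 := lt_add_one a
  obtain ⟨ξ, ⟨haξ, hξa⟩, hgrad⟩ := hy.exists_mul_sq_norm_gradient_eq hg ha
  have anti := hy.antitoneOn_comp hg ordConnected_Icc
  have hξ : ξ ∈ Icc a (a + 1) := ⟨haξ.le, hξa.le⟩
  have hleft : g (y ξ) ≤ g (y a) := anti (left_mem_Icc.2 ha.le) hξ haξ.le
  have hright : g (y (a + 1)) ≤ g (y ξ) := anti hξ (right_mem_Icc.2 ha.le) hξa.le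
  refine ⟨ξ, ?_, by rwa [add_sub_cancel_left, one_mul] at hgrad⟩
  have hyξ : IsGradientFlowOn g y (Icc a ξ) := hy.mono (Icc_subset_Icc_right hξa.le)
  calc ‖y ξ - y a‖ ^ 2
      ≤ (ξ - a) * (g (y a) - g (y ξ)) := hyξ.sq_norm_sub_le_mul_sub hg haξ.le
    _ ≤ 1 * (g (y a) - g (y ξ)) := by gcongr; linarith
    _ ≤ g (y a) - g (y (a + 1)) := by linarith

theorem exists_tendsto_sub_and_tendsto_gradient (hy : IsGradientFlowOn g y (Ici a))
    (hg : Differentiable ℝ g) {c : ℝ} (hc : Tendsto (fun t => g (y t)) atTop (𝓝 c)) :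
    ∃ ξ : ℝ → ℝ, Tendsto (fun t => y (ξ t) - y t) atTop (𝓝 0) ∧
      Tendsto (fun t => ∇ g (y (ξ t))) atTop (𝓝 0) := by
  have drop_tendsto : Tendsto (fun t => √(g (y t) - g (y (t + 1)))) atTop (𝓝 0) := by
    simpa using (hc.sub (hc.comp (tendsto_atTop_add_const_right atTop 1 tendsto_id))).sqrt
  have exists_time : ∀ t, ∃ ξ, a ≤ t → ‖y ξ - y t‖ ^ 2 ≤ g (y t) - g (y (t + 1)) ∧
      ‖∇ g (y ξ)‖ ^ 2 = g (y t) - g (y (t + 1)) := by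
    intro t
    by_cases ht : a ≤ t
    · have hyt : IsGradientFlowOn g y (Icc t (t + 1)) := hy.mono fun u hu => ht.trans hu.1
      exact (hyt.exists_sq_norm_sub_le_and_sq_norm_gradient_eq hg).imp fun ξ hξ _ => hξ
    · exact ⟨t, fun h => absurd h ht⟩
  choose ξ hξ using exists_time
  refine ⟨ξ, squeeze_zero_norm' ?_ drop_tendsto, squeeze_zero_norm' ?_ drop_tendsto⟩
  · filter_upwards [eventually_ge_atTop a] with t ht using Real.le_sqrt_of_sq_le (hξ t ht).1
  · filter_upwards [eventually_ge_atTop a] with t ht using Real.le_sqrt_of_sq_le (hξ t ht).2.le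

end IsGradientFlowOn

theorem limit_points_of_bounded_gradient_flow_are_critical_general
    (hy : IsGradientFlowOn g y (Ici a)) (hg : Differentiable ℝ g) {x : E}
    (hgrad : ContinuousAt (∇ g) x) (hx : MapClusterPt x atTop y) : ∇ g x = 0 := by
  have value_tendsto : Tendsto (fun t => g (y t)) atTop (𝓝 (g x)) :=
    tendsto_of_antitoneOn_Ici_of_mapClusterPt (hy.antitoneOn_comp hg ordConnected_Ici)
      (hx.continuousAt_comp hg.continuous.continuousAt)
  obtain ⟨ξ, hsub, hzero⟩ := hy.exists_tendsto_sub_and_tendsto_gradient hg value_tendsto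
  obtain ⟨U, hU, hyU⟩ := mapClusterPt_iff_ultrafilter.1 hx
  have shifted_tendsto : Tendsto (fun t => y (ξ t)) U (𝓝 x) := by
    simpa using (hsub.mono_left hU).add hyU
  exact tendsto_nhds_unique (hgrad.tendsto.comp shifted_tendsto) (hzero.mono_left hU)

end GradientFlow

/-- Every limit point, as `t → ∞`, of a bounded gradient-flow trajectory of a `C¹` function
is a critical point of that function. -/
theorem limit_points_of_bounded_gradient_flow_are_critical
    {n : ℕ}
    (g : EuclideanSpace ℝ (Fin n) → ℝ) (hg : ContDiff ℝ 1 g)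
    (y : ℝ → EuclideanSpace ℝ (Fin n))
    (hy : ∀ t ∈ Set.Ici (0 : ℝ),
      HasDerivWithinAt y (-(gradient g (y t))) (Set.Ici 0) t)
    (hbdd : Bornology.IsBounded (y '' Set.Ici (0 : ℝ))) :
    ∀ (ybar : EuclideanSpace ℝ (Fin n)) (tk : ℕ → ℝ),
      Filter.Tendsto tk Filter.atTop Filter.atTop →
      Filter.Tendsto (fun k => y (tk k)) Filter.atTop (nhds ybar) →
      gradient g ybar = 0 := by
  exact fun _ _ htk hlim =>
    limit_points_of_bounded_gradient_flow_are_critical_general hy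
      (hg.differentiable one_ne_zero) (continuous_gradient_of_contDiff hg).continuousAt
      (hlim.mapClusterPt.of_comp htk)
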